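/- arXiv:2108.01566 — 2 statements merged into one kernel-verified Lean document; each statement's English description precedes it below -/
import Mathlib

section
/- Let (A, t) be a C_k-algebra, let P be a prime filter of A, and let φ be the Birula–Rasiowa transformation. Then for every i with 1 ≤ i ≤ k: (a) t^i(P) is a prime filter of A; (b) P is a minimal (respectively maximal) prime filter if and only if t^i(P) is a minimal (respectively maximal) prime filter; (c) U is an ultrafilter if and only if t^i(U) is an ultrafilter; (d) φ(t^i(P)) = t^i(φ(P)); (e) if F is a c-filter of A with F ⊆ P, then F ⊆ φ(P) ∩ t^i(P); (f) if Q is a prime filter of A with P ⊆ Q, then φ(P) = Q or P = Q. -/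
universe u

/-- Modal pseudocomplemented De Morgan algebra (mpM-algebra). -/
class MpM (A : Type u) extends DistribLattice A, BoundedOrder A where
  dm : A → A   -- De Morgan negation ∼
  ps : A → A   -- pseudocomplement *
  dm_dm : ∀ x : A, dm (dm x) = x
  dm_sup : ∀ x y : A, dm (x ⊔ y) = dm x ⊓ dm y
  pseudo : ∀ a x : A, a ⊓ x = ⊥ ↔ x ≤ ps a
  modal : ∀ x : A, x ⊔ dm x ≤ x ⊔ ps x

open MpM

variable {A : Type u} [MpM A]

/-- ∇x = ∼(∼x ∧ x*) -/
def nabla (x : A) : A := dm (dm x ⊓ ps x)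

/-- △x = ∼∇∼x -/
def tri (x : A) : A := dm (nabla (dm x))

/-- A C_k-algebra structure on an mpM-algebra `A`: an automorphism `t` with `t^k = id`. -/
structure CkStr (A : Type u) [MpM A] (k : ℕ) where
  t : A → A
  bij : Function.Bijective t
  map_inf : ∀ x y : A, t (x ⊓ y) = t x ⊓ t y
  map_sup : ∀ x y : A, t (x ⊔ y) = t x ⊔ t y
  map_dm : ∀ x : A, t (dm x) = dm (t x)
  map_ps : ∀ x : A, t (ps x) = ps (t x)
  map_bot : t (⊥ : A) = ⊥
  map_top : t (⊤ : A) = ⊤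
  periodic : ∀ x : A, t^[k] x = x

/-- Lattice filter: nonempty, upward closed, closed under binary meets. -/
def IsLatFilter (F : Set A) : Prop :=
  F.Nonempty ∧ (∀ x ∈ F, ∀ y : A, x ≤ y → y ∈ F) ∧ ∀ x ∈ F, ∀ y ∈ F, x ⊓ y ∈ F

/-- c-filter: a filter closed under △ and t. -/
def IsCFilter {k : ℕ} (T : CkStr A k) (F : Set A) : Prop :=
  IsLatFilter F ∧ ∀ x ∈ F, tri x ∈ F ∧ T.t x ∈ F

/-- maximal c-filter: proper and not properly contained in a proper c-filter. -/
def IsMaxCFilter {k : ℕ} (T : CkStr A k) (N : Set A) : Prop :=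
  IsCFilter T N ∧ N ≠ Set.univ ∧
    ∀ G : Set A, IsCFilter T G → G ≠ Set.univ → N ⊆ G → N = G

/-- prime filter -/
def IsPrimeFilter (P : Set A) : Prop :=
  IsLatFilter P ∧ P ≠ Set.univ ∧ ∀ x y : A, x ⊔ y ∈ P → x ∈ P ∨ y ∈ P

/-- ultrafilter: maximal proper (lattice) filter -/
def IsUltraFilter (U : Set A) : Prop :=
  IsLatFilter U ∧ U ≠ Set.univ ∧
    ∀ G : Set A, IsLatFilter G → G ≠ Set.univ → U ⊆ G → U = G

/-- Birula–Rasiowa transformation φ(P) = A \ {∼x : x ∈ P}. -/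
def brPhi (P : Set A) : Set A := Set.univ \ (dm '' P)

/-- a ⇁ b = (⋁_{i=1}^{k} ∇(∼ t^i(a))) ∨ b -/
def rimp {k : ℕ} (T : CkStr A k) (a b : A) : A :=
  ((Finset.Icc 1 k).sup fun i => nabla (dm (T.t^[i] a))) ⊔ b

/-- cyclic deductive system -/
def IsCDS {k : ℕ} (T : CkStr A k) (D : Set A) : Prop :=
  (⊤ : A) ∈ D ∧ ∀ x ∈ D, ∀ y : A, rimp T x y ∈ D → y ∈ D

/-- maximal cyclic deductive system -/
def IsMaxCDS {k : ℕ} (T : CkStr A k) (M : Set A) : Prop :=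
  IsCDS T M ∧ M ≠ Set.univ ∧
    ∀ G : Set A, IsCDS T G → G ≠ Set.univ → M ⊆ G → M = G

/-- the smallest cyclic deductive system containing `X` -/
def genCDS {k : ℕ} (T : CkStr A k) (X : Set A) : Set A :=
  ⋂₀ {D : Set A | IsCDS T D ∧ X ⊆ D}

/-- K(A) = {x : t(x) = x and ∇x = x} -/
def Kset {k : ℕ} (T : CkStr A k) : Set A := {x : A | T.t x = x ∧ nabla x = x}

/-- consistency operator ∘x = ⋀_{i=0}^{k} t^i((∼x ∨ x) ∧ (x ∧ ∼x)*) -/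
def cCirc {k : ℕ} (T : CkStr A k) (x : A) : A :=
  (Finset.Icc 0 k).inf fun i => T.t^[i] ((dm x ⊔ x) ⊓ ps (x ⊓ dm x))

/-- x → y = ∼((∼(x∨y))* ∧ (x∨y)) ∨ ((∼(x∧y))* ∧ (x∧y)) -/
def mpTo (x y : A) : A :=
  dm (ps (dm (x ⊔ y)) ⊓ (x ⊔ y)) ⊔ (ps (dm (x ⊓ y)) ⊓ (x ⊓ y))

/-- x ⇒ y = (x → y) ∧ (∼y → ∼x) -/
def mpIff (x y : A) : A := mpTo x y ⊓ mpTo (dm y) (dm x)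

/-!
An automorphism carries every notion in sight to itself, so only two points need the algebra.

Since `△x = x ∧ (∼x)*`, a prime filter containing `△x` cannot contain `∼x`; hence a set closed
under `△` and contained in `P` lies in `φ(P)`. The `t`-part of (e) is periodicity: every `x ∈ F` is
`t^i` of a further `t`-iterate of `x`.

The transformation `φ` is an inclusion-reversing involution on prime filters, and the modal law
`x ∨ ∼x ≤ x ∨ x*` gives `Q ⊆ φ(P)` whenever `P ⊊ Q`. If moreover `Q ≠ φ(P)`, the same fact applied
to `Q ⊊ φ(P)` gives `φ(P) ⊆ φ(Q)`, that is `Q ⊆ P`, a contradiction.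
-/

section DeMorgan

theorem MpM.dm_antitone : Antitone (dm : A → A) := fun x y hxy => by
  rw [← sup_eq_right.2 hxy, dm_sup]
  exact inf_le_left

theorem MpM.dm_inf (x y : A) : dm (x ⊓ y) = dm x ⊔ dm y := by
  rw [← dm_dm (dm x ⊔ dm y), dm_sup, dm_dm, dm_dm]

theorem MpM.dm_bot : dm (⊥ : A) = ⊤ :=
  top_unique <| (dm_dm ⊤).ge.trans (dm_antitone bot_le)

theorem MpM.dm_top : dm (⊤ : A) = ⊥ := by
  rw [← dm_bot, dm_dm]

theorem MpM.inf_ps_self (x : A) : x ⊓ ps x = ⊥ :=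
  (pseudo x (ps x)).2 le_rfl

theorem tri_eq_inf_ps_dm (x : A) : tri x = x ⊓ ps (dm x) := by
  simp only [tri, nabla, dm_dm]

end DeMorgan

section LatFilter

variable {F : Set A} {x y : A}

theorem IsLatFilter.mem_of_le (hF : IsLatFilter F) (hx : x ∈ F) (hxy : x ≤ y) : y ∈ F :=
  hF.2.1 x hx y hxy

theorem IsLatFilter.inf_mem_iff (hF : IsLatFilter F) : x ⊓ y ∈ F ↔ x ∈ F ∧ y ∈ F :=
  ⟨fun h => ⟨hF.mem_of_le h inf_le_left, hF.mem_of_le h inf_le_right⟩,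
    fun h => hF.2.2 x h.1 y h.2⟩

theorem IsLatFilter.top_mem (hF : IsLatFilter F) : ⊤ ∈ F :=
  hF.1.elim fun _ hx => hF.mem_of_le hx le_top

theorem IsLatFilter.ne_univ_iff_bot_notMem (hF : IsLatFilter F) : F ≠ Set.univ ↔ ⊥ ∉ F :=
  not_congr ⟨fun h => h ▸ Set.mem_univ ⊥,
    fun h => Set.eq_univ_of_forall fun _ => hF.mem_of_le h bot_le⟩

theorem IsLatFilter.ps_notMem (hF : IsLatFilter F) (hne : F ≠ Set.univ) (hx : x ∈ F) :
    ps x ∉ F := fun hps =>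
  hF.ne_univ_iff_bot_notMem.1 hne <| inf_ps_self x ▸ hF.inf_mem_iff.2 ⟨hx, hps⟩

theorem IsPrimeFilter.sup_mem_iff (hF : IsPrimeFilter F) : x ⊔ y ∈ F ↔ x ∈ F ∨ y ∈ F :=
  ⟨hF.2.2 x y, fun h => h.elim (fun hx => hF.1.mem_of_le hx le_sup_left)
    fun hy => hF.1.mem_of_le hy le_sup_right⟩

end LatFilter

section BirulaRasiowa

variable {P Q : Set A} {x : A}

theorem mem_brPhi : x ∈ brPhi P ↔ dm x ∉ P := by
  have hdm : Function.Involutive (dm : A → A) := dm_dm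
  simp only [brPhi, Set.mem_sdiff, Set.mem_univ, true_and, hdm.image_eq_preimage_symm,
    Set.mem_preimage]

theorem brPhi_brPhi (P : Set A) : brPhi (brPhi P) = P := by
  ext x
  simp only [mem_brPhi, dm_dm, not_not]

theorem brPhi_antitone : Antitone (brPhi : Set A → Set A) := fun _ _ h =>
  Set.sdiff_subset_sdiff_right (Set.image_mono h)

theorem brPhi_subset_brPhi_iff : brPhi P ⊆ brPhi Q ↔ Q ⊆ P :=
  ⟨fun h => by simpa only [brPhi_brPhi] using brPhi_antitone h, fun h => brPhi_antitone h⟩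

theorem IsPrimeFilter.isPrimeFilter_brPhi (hP : IsPrimeFilter P) : IsPrimeFilter (brPhi P) := by
  have top_mem : ⊤ ∈ brPhi P := by
    rw [mem_brPhi, dm_top]
    exact hP.1.ne_univ_iff_bot_notMem.1 hP.2.1
  have bot_notMem : ⊥ ∉ brPhi P := by
    rw [mem_brPhi, dm_bot, not_not]
    exact hP.1.top_mem
  refine ⟨⟨⟨⊤, top_mem⟩, fun x hx y hxy => ?_, fun x hx y hy => ?_⟩,
    fun h => bot_notMem (h ▸ Set.mem_univ ⊥), fun x y hxy => ?_⟩
  · rw [mem_brPhi] at hx ⊢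
    exact fun hy => hx (hP.1.mem_of_le hy (dm_antitone hxy))
  · rw [mem_brPhi] at hx hy ⊢
    rw [dm_inf, hP.sup_mem_iff]
    exact not_or.2 ⟨hx, hy⟩
  · rwa [mem_brPhi, dm_sup, hP.1.inf_mem_iff, not_and_or, ← mem_brPhi, ← mem_brPhi] at hxy

theorem IsLatFilter.mem_brPhi_of_tri_mem (hP : IsLatFilter P) (hne : P ≠ Set.univ)
    (hx : tri x ∈ P) : x ∈ brPhi P := by
  rw [tri_eq_inf_ps_dm, hP.inf_mem_iff] at hx
  exact mem_brPhi.2 fun hdm => hP.ps_notMem hne hdm hx.2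

theorem IsPrimeFilter.mem_or_ps_mem_of_dm_mem (hP : IsPrimeFilter P) (hx : dm x ∈ P) :
    x ∈ P ∨ ps x ∈ P :=
  hP.sup_mem_iff.1 <| hP.1.mem_of_le hx (le_sup_right.trans (modal x))

theorem IsPrimeFilter.subset_brPhi_of_ssubset (hP : IsPrimeFilter P) (hQ : IsLatFilter Q)
    (hne : Q ≠ Set.univ) (hPQ : P ⊂ Q) : Q ⊆ brPhi P := by
  obtain ⟨x, hxQ, hxP⟩ := Set.exists_of_ssubset hPQ
  intro y hyQ
  rw [mem_brPhi]
  intro hdmy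
  -- Meeting `y` with `x` moves it out of `P` while keeping its De Morgan negation in `P`.
  have hdm : dm (x ⊓ y) ∈ P := hP.1.mem_of_le hdmy (dm_antitone inf_le_right)
  have hmem : x ⊓ y ∈ Q := hQ.inf_mem_iff.2 ⟨hxQ, hyQ⟩
  rcases hP.mem_or_ps_mem_of_dm_mem hdm with h | h
  · exact hxP (hP.1.inf_mem_iff.1 h).1
  · exact hQ.ps_notMem hne hmem (hPQ.subset h)

theorem IsPrimeFilter.brPhi_eq_or_eq_of_subset (hP : IsPrimeFilter P) (hQ : IsPrimeFilter Q)
    (hPQ : P ⊆ Q) : brPhi P = Q ∨ P = Q := by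
  by_contra! h
  have hssub : P ⊂ Q := hPQ.ssubset_of_ne h.2
  have hQφ : Q ⊂ brPhi P := (hP.subset_brPhi_of_ssubset hQ.1 hQ.2.1 hssub).ssubset_of_ne h.1.symm
  have hφ := hP.isPrimeFilter_brPhi
  exact hssub.not_subset <|
    brPhi_subset_brPhi_iff.1 (hQ.subset_brPhi_of_ssubset hφ.1 hφ.2.1 hQφ)

end BirulaRasiowa

section Image

theorem image_ne_univ_iff {α β : Type*} {f : α → β} (hf : Function.Bijective f) {s : Set α} :
    f '' s ≠ Set.univ ↔ s ≠ Set.univ := by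
  rw [← Set.image_univ_of_surjective hf.surjective, hf.injective.image_injective.ne_iff]

variable {B : Type*} [MpM B] (e : A ≃o B) {P : Set A}

theorem isLatFilter_image_iff : IsLatFilter (e '' P) ↔ IsLatFilter P := by
  simp only [IsLatFilter, Set.image_nonempty, Set.forall_mem_image, e.surjective.forall,
    e.le_iff_le, ← map_inf, e.injective.mem_set_image]

theorem isPrimeFilter_image_iff : IsPrimeFilter (e '' P) ↔ IsPrimeFilter P := by
  simp only [IsPrimeFilter, isLatFilter_image_iff, image_ne_univ_iff e.bijective,
    e.surjective.forall, ← map_sup, e.injective.mem_set_image]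

theorem isUltraFilter_image_iff : IsUltraFilter (e '' P) ↔ IsUltraFilter P := by
  simp only [IsUltraFilter, e.surjective.image_surjective.forall, isLatFilter_image_iff,
    image_ne_univ_iff e.bijective, Set.image_subset_image_iff e.injective,
    e.injective.image_injective.eq_iff]

theorem minimal_prime_image_iff :
    (∀ Q : Set B, IsPrimeFilter Q → Q ⊆ e '' P → Q = e '' P) ↔
      ∀ Q : Set A, IsPrimeFilter Q → Q ⊆ P → Q = P := by
  simp only [e.surjective.image_surjective.forall, isPrimeFilter_image_iff,
    Set.image_subset_image_iff e.injective, e.injective.image_injective.eq_iff]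

theorem maximal_prime_image_iff :
    (∀ Q : Set B, IsPrimeFilter Q → e '' P ⊆ Q → e '' P = Q) ↔
      ∀ Q : Set A, IsPrimeFilter Q → P ⊆ Q → P = Q := by
  simp only [e.surjective.image_surjective.forall, isPrimeFilter_image_iff,
    Set.image_subset_image_iff e.injective, e.injective.image_injective.eq_iff]

theorem brPhi_image {f : A → B} (hf : Function.Bijective f) (hdm : ∀ x, f (dm x) = dm (f x)) :
    brPhi (f '' P) = f '' brPhi P := by
  refine Set.ext (hf.surjective.forall.2 fun x => ?_)
  rw [mem_brPhi, ← hdm, hf.injective.mem_set_image, hf.injective.mem_set_image, mem_brPhi]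

end Image

section Iterate

variable {k : ℕ} (T : CkStr A k)

theorem CkStr.t_le_t_iff {x y : A} : T.t x ≤ T.t y ↔ x ≤ y := by
  rw [← inf_eq_left, ← T.map_inf, T.bij.injective.eq_iff, inf_eq_left]

theorem CkStr.iterate_le_iterate_iff (i : ℕ) {x y : A} : T.t^[i] x ≤ T.t^[i] y ↔ x ≤ y := by
  induction i with
  | zero => rfl
  | succ i ih => rw [Function.iterate_succ_apply', Function.iterate_succ_apply', T.t_le_t_iff, ih]

/-- The power `t^i` of the automorphism of a C_k-algebra as an order isomorphism, the form in which
the transport lemmas for images of filters apply to it. -/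
noncomputable def CkStr.iterateOrderIso (i : ℕ) : A ≃o A where
  toEquiv := Equiv.ofBijective T.t^[i] (T.bij.iterate i)
  map_rel_iff' := T.iterate_le_iterate_iff i

variable {T} in
theorem IsCFilter.subset_image_iterate (hk : 0 < k) {F : Set A}
    (hF : IsCFilter T F) (i : ℕ) : F ⊆ T.t^[i] '' F := fun x hx => by
  have hmaps : Set.MapsTo T.t F F := fun y hy => (hF.2 y hy).2
  have hperiod : T.t^[k * i] x = x := Function.IsPeriodicPt.mul_const (T.periodic x) i
  refine ⟨T.t^[k * i - i] x, hmaps.iterate _ hx, ?_⟩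
  rw [← Function.iterate_add_apply, Nat.add_sub_cancel' (Nat.le_mul_of_pos_left i hk), hperiod]

end Iterate

theorem stmt0_general (e : A ≃o A) (hdm : ∀ x, e (dm x) = dm (e x)) {P : Set A}
    (hP : IsPrimeFilter P) :
    IsPrimeFilter (e '' P) ∧
    ((∀ Q : Set A, IsPrimeFilter Q → Q ⊆ P → Q = P) ↔
      (∀ Q : Set A, IsPrimeFilter Q → Q ⊆ e '' P → Q = e '' P)) ∧
    ((∀ Q : Set A, IsPrimeFilter Q → P ⊆ Q → P = Q) ↔
      (∀ Q : Set A, IsPrimeFilter Q → e '' P ⊆ Q → e '' P = Q)) ∧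
    (∀ U : Set A, IsUltraFilter U ↔ IsUltraFilter (e '' U)) ∧
    brPhi (e '' P) = e '' brPhi P ∧
    (∀ F : Set A, (∀ x ∈ F, tri x ∈ F) → F ⊆ e '' F → F ⊆ P → F ⊆ brPhi P ∩ e '' P) ∧
    (∀ Q : Set A, IsPrimeFilter Q → P ⊆ Q → brPhi P = Q ∨ P = Q) :=
  ⟨(isPrimeFilter_image_iff e).2 hP,
    (minimal_prime_image_iff e).symm,
    (maximal_prime_image_iff e).symm,
    fun _ => (isUltraFilter_image_iff e).symm,
    brPhi_image e.bijective hdm,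
    fun _ htri himage hFP => Set.subset_inter
      (fun x hx => hP.1.mem_brPhi_of_tri_mem hP.2.1 (hFP (htri x hx)))
      (himage.trans (Set.image_mono hFP)),
    fun _ => hP.brPhi_eq_or_eq_of_subset⟩

theorem stmt0 {k : ℕ} (hk : 0 < k) (T : CkStr A k) (P : Set A)
    (hP : IsPrimeFilter P) :
    ∀ i : ℕ, 1 ≤ i → i ≤ k →
      (IsPrimeFilter (T.t^[i] '' P)) ∧
      ((∀ Q : Set A, IsPrimeFilter Q → Q ⊆ P → Q = P) ↔
        (∀ Q : Set A, IsPrimeFilter Q → Q ⊆ T.t^[i] '' P → Q = T.t^[i] '' P)) ∧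
      ((∀ Q : Set A, IsPrimeFilter Q → P ⊆ Q → P = Q) ↔
        (∀ Q : Set A, IsPrimeFilter Q → T.t^[i] '' P ⊆ Q → T.t^[i] '' P = Q)) ∧
      (∀ U : Set A, IsUltraFilter U ↔ IsUltraFilter (T.t^[i] '' U)) ∧
      (brPhi (T.t^[i] '' P) = T.t^[i] '' brPhi P) ∧
      (∀ F : Set A, IsCFilter T F → F ⊆ P → F ⊆ brPhi P ∩ T.t^[i] '' P) ∧
      (∀ Q : Set A, IsPrimeFilter Q → P ⊆ Q → brPhi P = Q ∨ P = Q) := by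
  intro i _ _
  obtain ⟨hprime, hmin, hmax, hultra, hφ, hfilter, hQ⟩ :=
    stmt0_general (T.iterateOrderIso i) (Function.Commute.iterate_left T.map_dm i) hP
  exact ⟨hprime, hmin, hmax, hultra, hφ, fun F hF =>
    hfilter F (fun x hx => (hF.2 x hx).1) (hF.subset_image_iterate hk i), hQ⟩
end

section
/- Let (A, t) be a C_k-algebra and N ⊆ A. Then N is a maximal c-filter of A if and only if there exists an ultrafilter U of A such that N = ⋂_{i=0}^{k-1} (t^i(U) ∩ φ(t^i(U))). -/
universe u

open MpM

variable {A : Type u} [MpM A]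

/-!
An element fixed by `△` is Boolean: its `∼` and its `*` coincide and are its complement.
Every filter `F` contains a largest c-filter, its kernel `{x | △ (t^j x) ∈ F for all j}`. For an
ultrafilter `U` the condition `△ x ∈ U` says that `x ∈ U` and `∼x ∉ U`, that is `x ∈ U ∩ φ(U)`, and
translating by the powers of `t` turns the kernel of `U` into `⋂_{i<k} (t^i(U) ∩ φ(t^i(U)))`.

A maximal c-filter lies in some ultrafilter, hence in its kernel, and so equals it. Conversely,
if `x` is not in the kernel of `U`, then the `t`-invariant Boolean element `c = ⋀_{i<k} △ (t^i x)`
is not in `U`, so `∼c` is in the kernel; a c-filter that contains the kernel and `x` contains both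
`c` and `∼c`, and is not proper.
-/

section Periodic

open Function

theorem inf_range_le_of_periodic {α : Type*} [SemilatticeInf α] [OrderTop α] {f : ℕ → α} {k : ℕ}
    (hf : Periodic f k) (hk : 0 < k) (j : ℕ) : (Finset.range k).inf f ≤ f j := by
  rw [← hf.map_mod_nat j]
  exact Finset.inf_le (Finset.mem_range.2 (Nat.mod_lt j hk))

theorem inf_range_succ_of_periodic {α : Type*} [SemilatticeInf α] [OrderTop α] {f : ℕ → α} {k : ℕ}
    (hf : Periodic f k) : ((Finset.range k).inf fun i => f (i + 1)) = (Finset.range k).inf f := by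
  rcases k.eq_zero_or_pos with rfl | hk
  · rfl
  refine le_antisymm (Finset.le_inf fun i _ => ?_) (Finset.le_inf fun i _ => ?_)
  · have hf_succ : Periodic (fun i => f (i + 1)) k := fun i => by
      simp only [add_right_comm i k 1, hf (i + 1)]
    calc ((Finset.range k).inf fun i => f (i + 1))
        ≤ f (i + (k - 1) + 1) := inf_range_le_of_periodic hf_succ hk _
      _ = f i := by rw [add_assoc, Nat.sub_add_cancel hk, hf]
  · exact inf_range_le_of_periodic hf hk (i + 1)

theorem iInter_image_iterate_of_isPeriodicPt {α : Type*} {f : α → α} {k : ℕ} (hk : 0 < k)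
    (hf : ∀ x, IsPeriodicPt f k x) (S : Set α) :
    ⋂ i ∈ Finset.range k, f^[i] '' S = {x | ∀ j, f^[j] x ∈ S} := by
  -- The inverse of `f^[j]` is `f^[j * (k - 1)]`.
  have iterate_inverse (j : ℕ) (x : α) : f^[j + j * (k - 1)] x = x := by
    rw [← mul_one_add, add_comm, Nat.sub_one_add_one hk.ne']
    exact (hf x).const_mul j
  ext x
  simp only [Set.mem_iInter, Finset.mem_range, Set.mem_ofPred_eq]
  constructor
  · intro h j
    obtain ⟨s, hs, rfl⟩ := h (j * (k - 1) % k) (Nat.mod_lt _ hk)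
    rwa [(hf s).iterate_mod_apply, ← iterate_add_apply, iterate_inverse]
  · intro h i _
    exact ⟨f^[i * (k - 1)] x, h _, by rw [← iterate_add_apply, iterate_inverse]⟩

end Periodic

namespace MpM

theorem dm_antitone_s2 : Antitone (dm : A → A) := fun x y h => by
  rw [← sup_eq_right.2 h, dm_sup]
  exact inf_le_left

theorem dm_inf_s2 (x y : A) : dm (x ⊓ y) = dm x ⊔ dm y := by
  rw [← dm_dm (dm x ⊔ dm y), dm_sup, dm_dm, dm_dm]

theorem dm_top_s2 : dm (⊤ : A) = ⊥ :=
  le_bot_iff.1 ((dm_antitone_s2 le_top).trans_eq (dm_dm ⊥))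

theorem dm_bot_s2 : dm (⊥ : A) = ⊤ := by
  rw [← dm_top_s2, dm_dm]

theorem le_ps_iff_disjoint {x a : A} : x ≤ ps a ↔ Disjoint a x := by
  rw [disjoint_iff, pseudo]

theorem disjoint_ps (x : A) : Disjoint x (ps x) :=
  le_ps_iff_disjoint.1 le_rfl

theorem ps_sup (x y : A) : ps (x ⊔ y) = ps x ⊓ ps y :=
  eq_of_forall_le_iff fun z => by
    simp only [le_inf_iff, le_ps_iff_disjoint, disjoint_sup_left]

theorem tri_eq_inf (x : A) : tri x = x ⊓ ps (dm x) := by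
  simp only [tri, nabla, dm_dm]

theorem tri_le (x : A) : tri x ≤ x :=
  (tri_eq_inf x).trans_le inf_le_left

theorem tri_inf (x y : A) : tri (x ⊓ y) = tri x ⊓ tri y := by
  simp only [tri_eq_inf, dm_inf_s2, ps_sup, inf_inf_inf_comm]

theorem tri_monotone : Monotone (tri : A → A) :=
  Monotone.of_map_inf tri_inf

theorem tri_eq_self_iff {x : A} : tri x = x ↔ Disjoint (dm x) x := by
  rw [tri_eq_inf, inf_eq_left, le_ps_iff_disjoint]

theorem tri_top : tri (⊤ : A) = ⊤ :=
  tri_eq_self_iff.2 (dm_top_s2 (A := A) ▸ disjoint_bot_left)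

theorem inf_dm_ps_dm_le (x : A) : x ⊓ dm (ps (dm x)) ≤ dm x := by
  have h := dm_antitone_s2 (modal (dm x))
  simp only [dm_sup, dm_dm] at h
  exact h.trans inf_le_right

theorem tri_tri (x : A) : tri (tri x) = tri x := by
  rw [tri_eq_self_iff, tri_eq_inf, dm_inf_s2, disjoint_sup_left]
  refine ⟨(disjoint_ps _).mono_right inf_le_right, ?_⟩
  refine disjoint_iff_inf_le.2 ?_
  calc dm (ps (dm x)) ⊓ (x ⊓ ps (dm x))
      = (x ⊓ dm (ps (dm x))) ⊓ ps (dm x) := by rw [← inf_assoc, inf_comm x]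
    _ ≤ dm x ⊓ ps (dm x) := inf_le_inf_right _ (inf_dm_ps_dm_le x)
    _ = ⊥ := (disjoint_ps _).eq_bot

theorem tri_dm_of_tri_eq_self {x : A} (hx : tri x = x) : tri (dm x) = dm x := by
  rw [tri_eq_self_iff, dm_dm]
  exact (tri_eq_self_iff.1 hx).symm

theorem ps_eq_dm_of_tri_eq_self {x : A} (hx : tri x = x) : ps x = dm x := by
  have hdisj : Disjoint (dm x) x := tri_eq_self_iff.1 hx
  have hcodisj : Codisjoint x (dm x) := by
    rw [codisjoint_iff, ← dm_bot_s2, ← hdisj.eq_bot, dm_inf_s2, dm_dm]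
  exact le_antisymm ((disjoint_ps x).symm.le_of_codisjoint hcodisj)
    (le_ps_iff_disjoint.2 hdisj.symm)

theorem mem_brPhi {P : Set A} {x : A} : x ∈ brPhi P ↔ dm x ∉ P := by
  rw [brPhi, ← Set.compl_eq_univ_sdiff, Set.mem_compl_iff,
    Set.mem_image_iff_of_inverse dm_dm dm_dm]

end MpM

namespace CkStr

variable {k : ℕ} (T : CkStr A k)

theorem iterate_inf (j : ℕ) (x y : A) : T.t^[j] (x ⊓ y) = T.t^[j] x ⊓ T.t^[j] y := by
  induction j with
  | zero => rfl
  | succ j ih => simp only [Function.iterate_succ_apply', ih, T.map_inf]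

theorem iterate_monotone (j : ℕ) : Monotone T.t^[j] :=
  Monotone.of_map_inf (T.iterate_inf j)

theorem commute_tri : Function.Commute T.t tri := fun x => by
  simp only [MpM.tri_eq_inf, T.map_inf, T.map_ps, T.map_dm]

theorem iterate_tri (j : ℕ) (x : A) : T.t^[j] (tri x) = tri (T.t^[j] x) :=
  T.commute_tri.iterate_left j x

theorem brPhi_image_iterate (j : ℕ) (P : Set A) :
    brPhi (T.t^[j] '' P) = T.t^[j] '' brPhi P := by
  have h_comm : Function.Commute T.t^[j] dm := Function.Commute.iterate_left T.map_dm j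
  simp only [brPhi, ← Set.compl_eq_univ_sdiff]
  rw [Set.image_compl_eq (T.bij.iterate j), h_comm.set_image P]

/-- The meet `⋀_{i<k} △ (t^i x)` over the orbit of `x`. For `k > 0` it is the largest element below
`x` that is fixed by both `△` and `t`; for `k = 0` the meet is empty and equals `⊤`. -/
def orbitMeet (x : A) : A :=
  (Finset.range k).inf fun i => tri (T.t^[i] x)

theorem periodic_tri_iterate (x : A) : Function.Periodic (fun i => tri (T.t^[i] x)) k := fun i => by
  simp only [Function.iterate_add_apply, T.periodic]

theorem orbitMeet_le_tri_iterate (hk : 0 < k) (x : A) (j : ℕ) :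
    T.orbitMeet x ≤ tri (T.t^[j] x) :=
  inf_range_le_of_periodic (T.periodic_tri_iterate x) hk j

theorem tri_orbitMeet (x : A) : tri (T.orbitMeet x) = T.orbitMeet x := by
  rw [orbitMeet, Finset.apply_inf_eq_inf_comp tri MpM.tri_inf MpM.tri_top]
  simp only [Function.comp_def, MpM.tri_tri]

theorem map_orbitMeet (x : A) : T.t (T.orbitMeet x) = T.orbitMeet x := by
  rw [orbitMeet, Finset.apply_inf_eq_inf_comp T.t T.map_inf T.map_top]
  simp only [Function.comp_def, T.commute_tri.eq, ← Function.iterate_succ_apply']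
  exact inf_range_succ_of_periodic (T.periodic_tri_iterate x)

end CkStr

namespace IsLatFilter

variable {F : Set A}

theorem mem_of_le_s2 (hF : IsLatFilter F) {x y : A} (hx : x ∈ F) (hxy : x ≤ y) : y ∈ F :=
  hF.2.1 x hx y hxy

theorem inf_mem (hF : IsLatFilter F) {x y : A} (hx : x ∈ F) (hy : y ∈ F) : x ⊓ y ∈ F :=
  hF.2.2 x hx y hy

theorem top_mem_s2 (hF : IsLatFilter F) : ⊤ ∈ F :=
  hF.1.elim fun _ hx => hF.mem_of_le_s2 hx le_top

theorem ne_univ_iff_bot_notMem_s2 (hF : IsLatFilter F) : F ≠ Set.univ ↔ ⊥ ∉ F := by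
  rw [Ne, not_iff_not, Set.eq_univ_iff_forall]
  exact ⟨fun h => h ⊥, fun h x => hF.mem_of_le_s2 h bot_le⟩

theorem adjoin (hF : IsLatFilter F) (x : A) : IsLatFilter {z | ∃ u ∈ F, u ⊓ x ≤ z} := by
  refine ⟨⟨⊤, ⊤, hF.top_mem_s2, le_top⟩, ?_, ?_⟩
  · rintro y ⟨u, hu, huy⟩ z hyz
    exact ⟨u, hu, huy.trans hyz⟩
  · rintro y ⟨u, hu, huy⟩ z ⟨v, hv, hvz⟩
    exact ⟨u ⊓ v, hF.inf_mem hu hv, le_inf ((inf_le_inf_right x inf_le_left).trans huy)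
      ((inf_le_inf_right x inf_le_right).trans hvz)⟩

theorem sUnion {c : Set (Set A)} (hc : ∀ G ∈ c, IsLatFilter G) (hdir : DirectedOn (· ⊆ ·) c)
    (hne : c.Nonempty) : IsLatFilter (⋃₀ c) := by
  refine ⟨?_, ?_, ?_⟩
  · obtain ⟨G, hG⟩ := hne
    exact ⟨⊤, G, hG, (hc G hG).top_mem_s2⟩
  · rintro x ⟨G, hG, hx⟩ y hxy
    exact ⟨G, hG, (hc G hG).mem_of_le_s2 hx hxy⟩
  · rintro x ⟨G, hG, hx⟩ y ⟨H, hH, hy⟩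
    obtain ⟨K, hK, hGK, hHK⟩ := hdir G hG H hH
    exact ⟨K, hK, (hc K hK).inf_mem (hGK hx) (hHK hy)⟩

theorem exists_isUltraFilter_superset (hF : IsLatFilter F) (hproper : F ≠ Set.univ) :
    ∃ U, IsUltraFilter U ∧ F ⊆ U := by
  obtain ⟨U, hFU, hU⟩ := zorn_subset_nonempty {G : Set A | IsLatFilter G ∧ ⊥ ∉ G}
    (fun c hc hchain hne => ⟨⋃₀ c,
      ⟨IsLatFilter.sUnion (fun G hG => (hc hG).1) hchain.directedOn hne,
        fun ⟨_, hG, hbot⟩ => (hc hG).2 hbot⟩,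
      fun _ => Set.subset_sUnion_of_mem⟩)
    F ⟨hF, hF.ne_univ_iff_bot_notMem_s2.1 hproper⟩
  exact ⟨U, ⟨hU.prop.1, hU.prop.1.ne_univ_iff_bot_notMem_s2.2 hU.prop.2, fun G hG hGproper hUG =>
    hU.eq_of_subset ⟨hG, hG.ne_univ_iff_bot_notMem_s2.1 hGproper⟩ hUG⟩, hFU⟩

end IsLatFilter

namespace IsUltraFilter

variable {U : Set A}

theorem bot_notMem (hU : IsUltraFilter U) : ⊥ ∉ U :=
  hU.1.ne_univ_iff_bot_notMem_s2.1 hU.2.1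

theorem exists_inf_eq_bot (hU : IsUltraFilter U) {x : A} (hx : x ∉ U) : ∃ u ∈ U, u ⊓ x = ⊥ := by
  by_contra hdisj
  have hG := hU.1.adjoin x
  have hGproper := hG.ne_univ_iff_bot_notMem_s2.2 fun ⟨u, hu, hux⟩ => hdisj ⟨u, hu, le_bot_iff.1 hux⟩
  have hUG := hU.2.2 _ hG hGproper fun u hu => ⟨u, hu, inf_le_left⟩
  exact hx (hUG ▸ ⟨⊤, hU.1.top_mem_s2, inf_le_right⟩)

theorem ps_mem_iff (hU : IsUltraFilter U) {x : A} : ps x ∈ U ↔ x ∉ U := by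
  constructor
  · intro hps hx
    exact hU.bot_notMem ((MpM.disjoint_ps x).eq_bot ▸ hU.1.inf_mem hx hps)
  · intro hx
    obtain ⟨u, hu, hux⟩ := hU.exists_inf_eq_bot hx
    exact hU.1.mem_of_le_s2 hu (MpM.le_ps_iff_disjoint.2 (disjoint_iff.2 hux).symm)

theorem inter_brPhi (hU : IsUltraFilter U) : U ∩ brPhi U = {x | tri x ∈ U} := by
  ext x
  rw [Set.mem_inter_iff, MpM.mem_brPhi, ← hU.ps_mem_iff, Set.mem_ofPred_eq, MpM.tri_eq_inf]
  exact ⟨fun h => hU.1.inf_mem h.1 h.2,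
    fun h => ⟨hU.1.mem_of_le_s2 h inf_le_left, hU.1.mem_of_le_s2 h inf_le_right⟩⟩

end IsUltraFilter

/-- The c-filter kernel of `F`: for a filter `F`, the largest c-filter contained in `F`. -/
def cKernel {k : ℕ} (T : CkStr A k) (F : Set A) : Set A :=
  {x | ∀ j, tri (T.t^[j] x) ∈ F}

section CKernel

variable {k : ℕ} (T : CkStr A k) {F G U : Set A}

theorem IsCFilter.iterate_mem {T : CkStr A k} (hG : IsCFilter T G) {x : A} (hx : x ∈ G) (j : ℕ) :
    T.t^[j] x ∈ G :=
  Set.MapsTo.iterate (fun y hy => (hG.2 y hy).2) j hx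

theorem IsCFilter.orbitMeet_mem {T : CkStr A k} (hG : IsCFilter T G) {x : A} (hx : x ∈ G) :
    T.orbitMeet x ∈ G :=
  Finset.inf_mem G hG.1.top_mem_s2 hG.1.2.2 _ _ fun i _ => (hG.2 _ (hG.iterate_mem hx i)).1

theorem IsCFilter.subset_cKernel {T : CkStr A k} (hG : IsCFilter T G) (hGF : G ⊆ F) :
    G ⊆ cKernel T F :=
  fun _ hx j => hGF (hG.2 _ (hG.iterate_mem hx j)).1

theorem IsLatFilter.cKernel_subset (hF : IsLatFilter F) : cKernel T F ⊆ F :=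
  fun x hx => hF.mem_of_le_s2 (hx 0) (MpM.tri_le x)

theorem IsLatFilter.isCFilter_cKernel (hF : IsLatFilter F) : IsCFilter T (cKernel T F) := by
  refine ⟨⟨⟨⊤, fun j => ?_⟩, fun x hx y hxy j => ?_, fun x hx y hy j => ?_⟩,
    fun x hx => ⟨fun j => ?_, fun j => hx (j + 1)⟩⟩
  · rw [Function.iterate_fixed T.map_top, MpM.tri_top]
    exact hF.top_mem_s2
  · exact hF.mem_of_le_s2 (hx j) (MpM.tri_monotone (T.iterate_monotone j hxy))
  · rw [T.iterate_inf, MpM.tri_inf]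
    exact hF.inf_mem (hx j) (hy j)
  · rw [T.iterate_tri, MpM.tri_tri]
    exact hx j

theorem IsLatFilter.cKernel_ne_univ (hF : IsLatFilter F) (hproper : F ≠ Set.univ) :
    cKernel T F ≠ Set.univ :=
  fun h => hproper (Set.univ_subset_iff.1 (h ▸ hF.cKernel_subset T))

theorem mem_cKernel_of_fixed {T : CkStr A k} {x : A} (hx : x ∈ F) (htri : tri x = x)
    (ht : T.t x = x) : x ∈ cKernel T F := fun j => by
  rwa [Function.iterate_fixed ht, htri]

theorem IsUltraFilter.dm_orbitMeet_mem_cKernel {T : CkStr A k} (hU : IsUltraFilter U) (hk : 0 < k)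
    {x : A} (hx : x ∉ cKernel T U) : dm (T.orbitMeet x) ∈ cKernel T U := by
  obtain ⟨j, hj⟩ : ∃ j, tri (T.t^[j] x) ∉ U := not_forall.1 hx
  have h_notMem : T.orbitMeet x ∉ U := fun h =>
    hj (hU.1.mem_of_le_s2 h (T.orbitMeet_le_tri_iterate hk x j))
  have h_dm_mem : dm (T.orbitMeet x) ∈ U :=
    MpM.ps_eq_dm_of_tri_eq_self (T.tri_orbitMeet x) ▸ hU.ps_mem_iff.2 h_notMem
  refine mem_cKernel_of_fixed h_dm_mem (MpM.tri_dm_of_tri_eq_self (T.tri_orbitMeet x)) ?_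
  rw [T.map_dm, T.map_orbitMeet]

theorem IsUltraFilter.isMaxCFilter_cKernel (hU : IsUltraFilter U) (hk : 0 < k) :
    IsMaxCFilter T (cKernel T U) := by
  refine ⟨hU.1.isCFilter_cKernel T, hU.1.cKernel_ne_univ T hU.2.1, fun G hG hGproper hsub =>
    hsub.antisymm fun x hxG => by_contra fun hxU => ?_⟩
  have h_dm_mem : dm (T.orbitMeet x) ∈ G := hsub (hU.dm_orbitMeet_mem_cKernel hk hxU)
  have h_disj := MpM.tri_eq_self_iff.1 (T.tri_orbitMeet x)
  exact hG.1.ne_univ_iff_bot_notMem_s2.1 hGproper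
    (h_disj.eq_bot ▸ hG.1.inf_mem h_dm_mem (hG.orbitMeet_mem hxG))

theorem IsMaxCFilter.eq_cKernel {T : CkStr A k} {N : Set A} (hN : IsMaxCFilter T N)
    (hF : IsLatFilter F) (hproper : F ≠ Set.univ) (hNF : N ⊆ F) : N = cKernel T F :=
  hN.2.2 _ (hF.isCFilter_cKernel T) (hF.cKernel_ne_univ T hproper) (hN.1.subset_cKernel hNF)

theorem IsUltraFilter.iInter_image_inter_brPhi (hU : IsUltraFilter U) (hk : 0 < k) :
    ⋂ i ∈ Finset.range k, (T.t^[i] '' U ∩ brPhi (T.t^[i] '' U)) = cKernel T U := by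
  have h_image (i : ℕ) :
      T.t^[i] '' U ∩ brPhi (T.t^[i] '' U) = T.t^[i] '' {x | tri x ∈ U} := by
    rw [T.brPhi_image_iterate, ← Set.image_inter (T.bij.iterate i).injective, hU.inter_brPhi]
  simp only [h_image]
  exact iInter_image_iterate_of_isPeriodicPt hk T.periodic _

end CKernel

theorem stmt2 {k : ℕ} (hk : 0 < k) (T : CkStr A k) (N : Set A) :
    IsMaxCFilter T N ↔
      ∃ U : Set A, IsUltraFilter U ∧
        N = ⋂ i ∈ Finset.range k, (T.t^[i] '' U ∩ brPhi (T.t^[i] '' U)) := by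
  constructor
  · intro hN
    obtain ⟨U, hU, hNU⟩ := hN.1.1.exists_isUltraFilter_superset hN.2.1
    refine ⟨U, hU, ?_⟩
    rw [hU.iInter_image_inter_brPhi T hk]
    exact hN.eq_cKernel hU.1 hU.2.1 hNU
  · rintro ⟨U, hU, rfl⟩
    rw [hU.iInter_image_inter_brPhi T hk]
    exact hU.isMaxCFilter_cKernel T hk
end
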